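/- Let n ≥ 2, 1 < p < n, set p* = np/(n-p), let 0 ≤ a ≤ 1, let r, t ∈ (1,∞] and u, v, w ∈ [1,∞] satisfy 1/r = a/p* + (1-a)/t and 1/u = a/v + (1-a)/w. Then there exists a constant c > 0 such that for every smooth compactly supported f : ℝⁿ → ℝ, ‖f‖_{r,u} ≤ c ‖ |∇f| ‖_{p,v}^{a} · ‖f‖_{t,w}^{1-a}. -/

import Mathlib

open MeasureTheory Set ENNReal

/-- The distribution function `μ_f(λ) = μ{x : |f x| > λ}` of a function. -/
noncomputable def distribFn {α : Type*} [MeasurableSpace α] (μ : Measure α)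
    (f : α → ℝ) (l : ℝ≥0∞) : ℝ≥0∞ :=
  μ {x | l < ENNReal.ofReal |f x|}

/-- The decreasing rearrangement `f*(t) = inf {λ > 0 : μ_f(λ) ≤ t}`. -/
noncomputable def rearr {α : Type*} [MeasurableSpace α] (μ : Measure α)
    (f : α → ℝ) (t : ℝ) : ℝ≥0∞ :=
  sInf {l : ℝ≥0∞ | 0 < l ∧ distribFn μ f l ≤ ENNReal.ofReal t}

/-- The Lorentz `L^{p,q}` (quasi)norm
`‖f‖_{p,q} = (∫₀^∞ (t^{1/p} f*(t))^q dt/t)^{1/q}` for `q < ∞`, and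
`‖f‖_{p,∞} = sup_{t>0} t^{1/p} f*(t)`. -/
noncomputable def lorentz {α : Type*} [MeasurableSpace α] (μ : Measure α)
    (p q : ℝ≥0∞) (f : α → ℝ) : ℝ≥0∞ :=
  if q = ∞ then ⨆ t ∈ Ioi (0 : ℝ), ENNReal.ofReal t ^ p.toReal⁻¹ * rearr μ f t
  else (∫⁻ t in Ioi (0 : ℝ),
      (ENNReal.ofReal t ^ p.toReal⁻¹ * rearr μ f t) ^ q.toReal / ENNReal.ofReal t) ^ q.toReal⁻¹


/-- The measure `dt/t` on the positive half line. -/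
noncomputable def mT : Measure ℝ :=
  (volume.restrict (Ioi (0:ℝ))).withDensity (fun t => (ENNReal.ofReal t)⁻¹)

noncomputable def LN (v : ℝ≥0∞) (F : ℝ → ℝ≥0∞) : ℝ≥0∞ :=
  if v = ∞ then ⨆ t ∈ Ioi (0 : ℝ), F t
  else (∫⁻ t, F t ^ v.toReal ∂mT) ^ v.toReal⁻¹

lemma lintegral_mT (F : ℝ → ℝ≥0∞) (hF : Measurable F) :
    ∫⁻ t, F t ∂mT = ∫⁻ t in Ioi (0:ℝ), F t / ENNReal.ofReal t := by
  rw [mT, lintegral_withDensity_eq_lintegral_mul _ (by fun_prop) hF]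
  simp [div_eq_mul_inv, mul_comm]

lemma ae_mT : ∀ᵐ t ∂mT, t ∈ Ioi (0:ℝ) :=
  (withDensity_absolutelyContinuous _ _).ae_le (ae_restrict_mem measurableSet_Ioi)

lemma lintegral_mT_dil (F : ℝ → ℝ≥0∞) (hF : Measurable F) {c : ℝ} (hc : 0 < c) :
    ∫⁻ t, F (c * t) ∂mT = ∫⁻ t, F t ∂mT := by
  rw [lintegral_mT _ hF, lintegral_mT (fun t => F (c * t)) (hF.comp (measurable_const_mul c)),
    ← lintegral_indicator measurableSet_Ioi, ← lintegral_indicator measurableSet_Ioi]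
  have hH : Measurable ((Ioi (0:ℝ)).indicator fun t => F t / ENNReal.ofReal t) :=
    Measurable.indicator (by fun_prop) measurableSet_Ioi
  have h := lintegral_map (μ := volume) hH (measurable_const_mul c)
  rw [Real.map_volume_mul_left hc.ne', lintegral_smul_measure] at h
  have hcc : ENNReal.ofReal c * ENNReal.ofReal |c⁻¹| = 1 := by
    rw [← ENNReal.ofReal_mul hc.le, abs_of_pos (inv_pos.2 hc), mul_inv_cancel₀ hc.ne']; simp
  have h2 := congrArg (fun z => ENNReal.ofReal c * z) h
  simp only [smul_eq_mul, ← mul_assoc, hcc, one_mul] at h2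
  rw [h2, ← lintegral_const_mul' _ _ ENNReal.ofReal_ne_top]
  apply lintegral_congr
  intro t
  by_cases ht : t ∈ Ioi (0:ℝ)
  · have ht' : c * t ∈ Ioi (0:ℝ) := mul_pos hc ht
    have h0 : ENNReal.ofReal c ≠ 0 := by simpa using hc
    have h1 : ENNReal.ofReal c ≠ ∞ := ENNReal.ofReal_ne_top
    simp only [Function.comp, indicator_of_mem ht, indicator_of_mem ht']
    rw [ENNReal.ofReal_mul hc.le, div_eq_mul_inv, div_eq_mul_inv,
      ENNReal.mul_inv (Or.inl h0) (Or.inl h1)]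
    rw [mul_left_comm, ← mul_assoc (ENNReal.ofReal c), ENNReal.mul_inv_cancel h0 h1, one_mul]
  · have ht' : c * t ∉ Ioi (0:ℝ) := fun h => ht ((mul_pos_iff_of_pos_left hc).1 h)
    simp only [Function.comp, indicator_of_notMem ht, indicator_of_notMem ht', mul_zero]

lemma LN_mono {v : ℝ≥0∞} {F G : ℝ → ℝ≥0∞} (h : ∀ t, 0 < t → F t ≤ G t) : LN v F ≤ LN v G := by
  unfold LN
  split_ifs
  · exact iSup₂_mono h
  · refine ENNReal.rpow_le_rpow (lintegral_mono_ae ?_) (by positivity)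
    filter_upwards [ae_mT] with t ht
    exact ENNReal.rpow_le_rpow (h t ht) (by positivity)

lemma toReal_ge {v : ℝ≥0∞} (hv : 1 ≤ v) (h : v ≠ ∞) : 1 ≤ v.toReal := by
  simpa using ENNReal.toReal_mono h hv

lemma LN_const_mul {v : ℝ≥0∞} (hv : 1 ≤ v) (c : ℝ≥0∞) {F : ℝ → ℝ≥0∞} (hF : Measurable F) :
    LN v (fun t => c * F t) = c * LN v F := by
  unfold LN
  split_ifs with h
  · simp_rw [ENNReal.mul_iSup]
  · have := toReal_ge hv h
    simp_rw [ENNReal.mul_rpow_of_nonneg _ _ (zero_le_one.trans this)]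
    rw [lintegral_const_mul _ (by fun_prop), ENNReal.mul_rpow_of_nonneg _ _ (by positivity),
      ← ENNReal.rpow_mul, mul_inv_cancel₀ (by linarith), ENNReal.rpow_one]

lemma LN_dil {v : ℝ≥0∞} {F : ℝ → ℝ≥0∞} (hF : Measurable F) {c : ℝ} (hc : 0 < c) :
    LN v (fun t => F (c * t)) = LN v F := by
  unfold LN
  split_ifs with h
  · apply le_antisymm
    · exact iSup₂_le fun t ht => le_iSup₂_of_le (c * t) (mul_pos hc ht) le_rfl
    · refine iSup₂_le fun t ht => le_iSup₂_of_le (c⁻¹ * t) (mul_pos (inv_pos.2 hc) ht) ?_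
      simp only [mul_inv_cancel_left₀ hc.ne', le_refl]
  · rw [lintegral_mT_dil (fun t => F t ^ v.toReal) (by fun_prop) hc]

lemma LN_sum_le {v : ℝ≥0∞} (hv : 1 ≤ v) (h : v ≠ ∞) {F : ℕ → ℝ → ℝ≥0∞}
    (hF : ∀ k, Measurable (F k)) (N : ℕ) :
    LN v (fun t => ∑ k ∈ Finset.range N, F k t) ≤ ∑ k ∈ Finset.range N, LN v (F k) := by
  have h1 := toReal_ge hv h
  induction N with
  | zero =>
    simp only [Finset.range_zero, Finset.sum_empty, LN, if_neg h]
    rw [ENNReal.zero_rpow_of_pos (by linarith)]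
    simp; linarith
  | succ N ih =>
    simp only [Finset.sum_range_succ]
    refine le_trans ?_ (add_le_add_left ih _)
    simp only [LN, if_neg h]
    have := ENNReal.lintegral_Lp_add_le (μ := mT)
      (f := fun t => ∑ k ∈ Finset.range N, F k t) (g := F N) (by fun_prop) (by fun_prop) h1
    simpa using this

lemma LN_tsum_le {v : ℝ≥0∞} (hv : 1 ≤ v) {F : ℕ → ℝ → ℝ≥0∞}
    (hF : ∀ k, Measurable (F k)) :
    LN v (fun t => ∑' k, F k t) ≤ ∑' k, LN v (F k) := by
  by_cases h : v = ∞
  · simp only [LN, if_pos h]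
    exact iSup₂_le fun t ht => ENNReal.tsum_le_tsum fun k =>
      le_iSup₂_of_le t ht le_rfl
  · have h1 := toReal_ge hv h
    have h0 : 0 < v.toReal := by linarith
    have key : ∫⁻ t, (∑' k, F k t) ^ v.toReal ∂mT
        = ⨆ N, ∫⁻ t, (∑ k ∈ Finset.range N, F k t) ^ v.toReal ∂mT := by
      rw [← lintegral_iSup (fun N => by fun_prop)]
      · apply lintegral_congr
        intro t
        rw [ENNReal.tsum_eq_iSup_nat]
        exact (ENNReal.orderIsoRpow v.toReal h0).map_iSup _
      · intro N M hNM t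
        exact ENNReal.rpow_le_rpow (Finset.sum_le_sum_of_subset (Finset.range_mono hNM)) h0.le
    have : LN v (fun t => ∑' k, F k t) = (∫⁻ t, (∑' k, F k t) ^ v.toReal ∂mT) ^ v.toReal⁻¹ := by
      simp only [LN, if_neg h]
    rw [this, key, ENNReal.rpow_inv_le_iff h0]
    refine iSup_le fun N => ?_
    rw [← ENNReal.rpow_inv_le_iff h0]
    have h3 := LN_sum_le hv h hF N
    simp only [LN, if_neg h] at h3 ⊢
    exact h3.trans (ENNReal.sum_le_tsum _)

lemma LN_holder {u v w : ℝ≥0∞} (hu : 1 ≤ u) (hv : 1 ≤ v) (hw : 1 ≤ w) {a : ℝ} (ha0 : 0 < a)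
    (ha1 : a < 1) (huvw : 1 / u = ENNReal.ofReal a / v + ENNReal.ofReal (1 - a) / w)
    {A B : ℝ → ℝ≥0∞} (hA : Measurable A) (hB : Measurable B) :
    LN u (fun t => A t ^ a * B t ^ (1 - a)) ≤ LN v A ^ a * LN w B ^ (1 - a) := by
  have hb0 : 0 < 1 - a := by linarith
  have e1 : u.toReal⁻¹ = a * v.toReal⁻¹ + (1 - a) * w.toReal⁻¹ := by
    have := congrArg ENNReal.toReal huvw
    rw [ENNReal.toReal_add] at this
    · simpa [ENNReal.toReal_div, ENNReal.toReal_ofReal ha0.le, ENNReal.toReal_ofReal hb0.le,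
        div_eq_mul_inv] using this
    · exact ENNReal.div_ne_top ENNReal.ofReal_ne_top (by positivity)
    · exact ENNReal.div_ne_top ENNReal.ofReal_ne_top (by positivity)
  -- essential bound
  have esup : ∀ {G : ℝ → ℝ≥0∞} {t : ℝ}, 0 < t → G t ≤ LN ∞ G := by
    intro G t ht
    simp only [LN, if_true]
    exact le_iSup₂_of_le t ht le_rfl
  by_cases hU : u = ∞
  · have hv' : v = ∞ := by
      by_contra hne
      have := toReal_ge hv hne
      have h2 : 0 < a * v.toReal⁻¹ := by positivity
      have h3 : 0 ≤ (1 - a) * w.toReal⁻¹ := by positivity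
      simp [hU] at e1
      linarith
    have hw' : w = ∞ := by
      by_contra hne
      have := toReal_ge hw hne
      have h2 : 0 < (1 - a) * w.toReal⁻¹ := by positivity
      have h3 : 0 ≤ a * v.toReal⁻¹ := by positivity
      simp [hU] at e1
      linarith
    subst hU hv' hw'
    conv_lhs => simp only [LN, if_true]
    exact iSup₂_le fun t ht => mul_le_mul' (ENNReal.rpow_le_rpow (esup ht) ha0.le)
      (ENNReal.rpow_le_rpow (esup ht) hb0.le)
  have hu1 := toReal_ge hu hU
  have hu0 : 0 < u.toReal := by linarith
  have lhs : LN u (fun t => A t ^ a * B t ^ (1 - a))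
      = (∫⁻ t, A t ^ (a * u.toReal) * B t ^ ((1 - a) * u.toReal) ∂mT) ^ u.toReal⁻¹ := by
    simp only [LN, if_neg hU]
    congr 2
    ext t
    rw [ENNReal.mul_rpow_of_nonneg _ _ hu0.le, ENNReal.rpow_mul, ENNReal.rpow_mul]
  rw [lhs, ENNReal.rpow_inv_le_iff hu0, ENNReal.mul_rpow_of_nonneg _ _ hu0.le,
    ← ENNReal.rpow_mul, ← ENNReal.rpow_mul]
  by_cases hV : v = ∞
  · by_cases hW : w = ∞
    · simp [hV, hW] at e1
      exact absurd e1.symm (by intro h; rw [ENNReal.toReal_eq_zero_iff] at *; aesop)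
    · have hw1 := toReal_ge hw hW
      have e2 : (1 - a) * u.toReal = w.toReal := by
        simp [hV] at e1
        field_simp at e1
        linarith
      subst hV
      rw [e2]
      have : LN w B ^ w.toReal = ∫⁻ t, B t ^ w.toReal ∂mT := by
        simp only [LN, if_neg hW]
        rw [← ENNReal.rpow_mul, inv_mul_cancel₀ (by linarith), ENNReal.rpow_one]
      rw [this, ← lintegral_const_mul _ (by fun_prop)]
      refine lintegral_mono_ae ?_
      filter_upwards [ae_mT] with t ht
      gcongr
      exact esup ht
  · have hv1 := toReal_ge hv hV
    have hA2 : LN v A ^ v.toReal = ∫⁻ t, A t ^ v.toReal ∂mT := by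
      simp only [LN, if_neg hV]
      rw [← ENNReal.rpow_mul, inv_mul_cancel₀ (by linarith), ENNReal.rpow_one]
    by_cases hW : w = ∞
    · have e2 : a * u.toReal = v.toReal := by
        simp [hW] at e1
        field_simp at e1
        linarith
      subst hW
      rw [e2, hA2, ← lintegral_mul_const _ (by fun_prop)]
      refine lintegral_mono_ae ?_
      filter_upwards [ae_mT] with t ht
      gcongr
      exact esup ht
    · have hw1 := toReal_ge hw hW
      have hB2 : LN w B ^ w.toReal = ∫⁻ t, B t ^ w.toReal ∂mT := by
        simp only [LN, if_neg hW]
        rw [← ENNReal.rpow_mul, inv_mul_cancel₀ (by linarith), ENNReal.rpow_one]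
      have h := ENNReal.lintegral_mul_norm_pow_le (μ := mT) (f := fun t => A t ^ v.toReal)
        (g := fun t => B t ^ w.toReal) (by fun_prop) (by fun_prop)
        (p := a * u.toReal / v.toReal) (q := (1 - a) * u.toReal / w.toReal)
        (by positivity) (by positivity) (by
          have : u.toReal * u.toReal⁻¹ = 1 := mul_inv_cancel₀ hu0.ne'
          rw [e1] at this
          linear_combination this)
      rw [← hA2, ← hB2] at h
      simp only [← ENNReal.rpow_mul] at h
      rw [mul_div_cancel₀ _ (by linarith), mul_div_cancel₀ _ (by linarith)] at h
      exact h

section rearrLemmas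

variable {α : Type*} [MeasurableSpace α] (μ : Measure α)

lemma rearr_antitone (f : α → ℝ) : Antitone (rearr μ f) := by
  intro s t hst
  exact sInf_le_sInf fun l hl => ⟨hl.1, hl.2.trans (ENNReal.ofReal_le_ofReal hst)⟩

lemma rearr_measurable (f : α → ℝ) : Measurable (rearr μ f) := (rearr_antitone μ f).measurable

lemma distrib_rearr_le (f : α → ℝ) (t : ℝ) :
    distribFn μ f (rearr μ f t) ≤ ENNReal.ofReal t := by
  have hne : {l : ℝ≥0∞ | 0 < l ∧ distribFn μ f l ≤ ENNReal.ofReal t}.Nonempty :=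
    ⟨∞, by simp, by simp [distribFn]⟩
  obtain ⟨x, hx, hlim, hmem⟩ := exists_seq_tendsto_sInf hne (OrderBot.bddBelow _)
  have hsub : {y | rearr μ f t < ENNReal.ofReal |f y|} ⊆
      ⋃ k, {y | x k < ENNReal.ofReal |f y|} := by
    intro y hy
    obtain ⟨k, hk⟩ := (hlim.eventually_lt_const hy).exists
    exact mem_iUnion.2 ⟨k, hk⟩
  refine (measure_mono hsub).trans ?_
  have hm : Monotone fun k => {y | x k < ENNReal.ofReal |f y|} := by
    intro i j hij y hy
    exact lt_of_le_of_lt (hx hij) hy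
  rw [hm.measure_iUnion]
  exact iSup_le fun k => (hmem k).2

lemma lt_distrib_of_lt_rearr (f : α → ℝ) (t : ℝ) {b : ℝ≥0∞} (hb : 0 < b)
    (h : b < rearr μ f t) : ENNReal.ofReal t < distribFn μ f b := by
  by_contra hle
  exact absurd (sInf_le (show b ∈ {l : ℝ≥0∞ | 0 < l ∧ distribFn μ f l ≤ ENNReal.ofReal t} from
    ⟨hb, not_lt.1 hle⟩)) (not_le.2 h)

/-- Dyadic substitute for the maximal average of the rearrangement. -/
noncomputable def RR (g : α → ℝ) (s : ℝ) : ℝ≥0∞ :=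
  ∑' k : ℕ, ENNReal.ofReal ((1/2)^k) * rearr μ g (s * (1/2)^k)

lemma RR_measurable (g : α → ℝ) : Measurable (RR μ g) := by
  unfold RR
  have := rearr_measurable μ g
  fun_prop

lemma setLIntegral_le_RR {g : α → ℝ} (hg : Measurable g) {E : Set α} {T : ℝ} (hT : 0 < T)
    (hE : μ E ≤ ENNReal.ofReal T) :
    ∫⁻ x in E, ENNReal.ofReal |g x| ∂μ ≤ 2 * ENNReal.ofReal T * RR μ g T := by
  have hg' : Measurable fun x => ENNReal.ofReal |g x| := by fun_prop
  have hae : ∀ᵐ x ∂μ, ∃ k : ℕ, ENNReal.ofReal |g x| ≤ rearr μ g (T * (1/2)^k) := by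
    rw [ae_iff]
    push Not
    have hlim : Filter.Tendsto (fun k : ℕ => ENNReal.ofReal (T * (1/2)^k)) Filter.atTop
        (nhds 0) := by
      have := (tendsto_pow_atTop_nhds_zero_of_lt_one (r := (1/2:ℝ)) (by norm_num)
        (by norm_num)).const_mul T
      simpa using ENNReal.tendsto_ofReal this
    refine le_antisymm (ge_of_tendsto' hlim fun k => ?_) (zero_le)
    refine (measure_mono ?_).trans (distrib_rearr_le μ g (T * (1/2)^k))
    intro x hx
    exact hx k
  have hpt : ∀ᵐ x ∂μ, ENNReal.ofReal |g x| ≤ rearr μ g T + ∑' k : ℕ,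
      ({x | rearr μ g (T * (1/2)^k) < ENNReal.ofReal |g x|}).indicator
        (fun _ => rearr μ g (T * (1/2)^(k+1))) x := by
    classical
    filter_upwards [hae] with x hx
    rcases h : Nat.find hx with _ | m
    · have := Nat.find_spec hx
      rw [h] at this
      simp only [pow_zero, mul_one] at this
      exact this.trans le_self_add
    · have h1 := Nat.find_spec hx
      have h2 := Nat.find_min hx (m := m) (by omega)
      rw [h] at h1
      push Not at h2
      refine le_trans ?_ le_add_self
      refine le_trans ?_ (ENNReal.le_tsum m)
      rw [indicator_of_mem (by exact h2)]
      exact h1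
  have hms : ∀ k : ℕ, MeasurableSet {x | rearr μ g (T * (1/2)^k) < ENNReal.ofReal |g x|} :=
    fun k => measurableSet_lt measurable_const hg'
  calc ∫⁻ x in E, ENNReal.ofReal |g x| ∂μ
      ≤ ∫⁻ x in E, (rearr μ g T + ∑' k : ℕ,
      ({x | rearr μ g (T * (1/2)^k) < ENNReal.ofReal |g x|}).indicator
        (fun _ => rearr μ g (T * (1/2)^(k+1))) x) ∂μ :=
        lintegral_mono_ae (ae_restrict_of_ae hpt)
    _ = rearr μ g T * μ E + ∑' k : ℕ, ∫⁻ x in E,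
      ({x | rearr μ g (T * (1/2)^k) < ENNReal.ofReal |g x|}).indicator
        (fun _ => rearr μ g (T * (1/2)^(k+1))) x ∂μ := by
        rw [lintegral_add_left measurable_const, lintegral_tsum]
        · simp
        · exact fun k => (measurable_const.indicator (hms k)).aemeasurable
    _ ≤ rearr μ g T * ENNReal.ofReal T + ∑' k : ℕ,
          rearr μ g (T * (1/2)^(k+1)) * ENNReal.ofReal (T * (1/2)^k) := by
        gcongr with k
        rw [lintegral_indicator_const (hms k)]
        gcongr
        exact (Measure.restrict_apply_le _ _).trans (distrib_rearr_le μ g _)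
    _ ≤ 2 * ENNReal.ofReal T * RR μ g T := by
        unfold RR
        rw [tsum_eq_zero_add' (f := fun k : ℕ =>
          ENNReal.ofReal ((1/2)^k) * rearr μ g (T * (1/2)^k)) ENNReal.summable, mul_add,
          ← ENNReal.tsum_mul_left]
        refine add_le_add ?_ (ENNReal.tsum_le_tsum fun k => ?_)
        · simp only [pow_zero, mul_one, ENNReal.ofReal_one, one_mul]
          rw [mul_comm, mul_assoc, two_mul]
          exact le_self_add
        · apply le_of_eq
          have : ENNReal.ofReal (T * (1/2)^k)
              = 2 * ENNReal.ofReal T * ENNReal.ofReal ((1/2)^(k+1)) := by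
            rw [show (2:ℝ≥0∞) = ENNReal.ofReal 2 by simp, ← ENNReal.ofReal_mul (by norm_num),
              ← ENNReal.ofReal_mul (by positivity)]
            congr 1
            rw [pow_succ]; ring
          rw [this]; ring

end rearrLemmas

lemma deriv_smoothTransition_bound : ∃ M : ℝ, 0 < M ∧ ∀ x, |deriv Real.smoothTransition x| ≤ M ∧
    (x ≤ 0 → deriv Real.smoothTransition x = 0) ∧ (1 ≤ x → deriv Real.smoothTransition x = 0) := by
  have hc : Continuous (deriv Real.smoothTransition) :=
    (Real.smoothTransition.contDiff (n := 1)).continuous_deriv le_rfl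
  have h0 : ∀ x ≤ 0, deriv Real.smoothTransition x = 0 := by
    intro x hx
    apply IsLocalMin.deriv_eq_zero
    refine Filter.Eventually.of_forall fun y => ?_
    rw [Real.smoothTransition.zero_of_nonpos hx]
    exact Real.smoothTransition.nonneg y
  have h1 : ∀ x, 1 ≤ x → deriv Real.smoothTransition x = 0 := by
    intro x hx
    apply IsLocalMax.deriv_eq_zero
    refine Filter.Eventually.of_forall fun y => ?_
    rw [Real.smoothTransition.one_of_one_le hx]
    exact Real.smoothTransition.le_one y
  obtain ⟨M, hM⟩ := isCompact_Icc.exists_bound_of_continuousOn (s := Icc (0:ℝ) 1) hc.continuousOn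
  refine ⟨max M 1, by positivity, fun x => ⟨?_, h0 x, h1 x⟩⟩
  by_cases hx : x ∈ Icc (0:ℝ) 1
  · exact (hM x hx).trans (le_max_left _ _)
  · have : deriv Real.smoothTransition x = 0 := by
      by_cases hx0 : x ≤ 0
      · exact h0 x hx0
      · refine h1 x ?_
        by_contra hlt
        exact hx ⟨by linarith, by linarith⟩
    rw [this]; simp

lemma trunc_sobolev (n : ℕ) (hn : 2 ≤ n) : ∃ C : ℝ≥0∞, C ≠ ∞ ∧
    ∀ f : EuclideanSpace ℝ (Fin n) → ℝ, ContDiff ℝ (⊤ : ℕ∞) f → HasCompactSupport f →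
    ∀ a b : ℝ, 0 ≤ a → a < b →
      ENNReal.ofReal (b - a) * (volume {x | b < |f x|}) ^ (1 - (n:ℝ)⁻¹) ≤
        C * ∫⁻ x in {x | a < |f x|}, ENNReal.ofReal ‖gradient f x‖ := by
  obtain ⟨M, hM0, hM⟩ := deriv_smoothTransition_bound
  have hn' : (2:ℝ) ≤ n := by exact_mod_cast hn
  set q : ℝ := (1 - (n:ℝ)⁻¹)⁻¹ with hq
  have hni : (n:ℝ)⁻¹ ≤ 2⁻¹ := inv_anti₀ (by norm_num) hn'
  have hni0 : 0 < (n:ℝ)⁻¹ := by positivity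
  have hq0 : 0 < q := by rw [hq]; apply inv_pos.2; linarith
  have hconj : Real.HolderConjugate (Module.finrank ℝ (EuclideanSpace ℝ (Fin n))) q := by
    rw [finrank_euclideanSpace_fin]
    refine ⟨?_, by positivity, hq0⟩
    rw [hq]; simp
  set K := lintegralPowLePowLIntegralFDerivConst (volume : Measure (EuclideanSpace ℝ (Fin n))) q
    with hK
  refine ⟨(K:ℝ≥0∞) ^ q⁻¹ * ENNReal.ofReal (2 * M), ?_, ?_⟩
  · exact ENNReal.mul_ne_top (ENNReal.rpow_ne_top_of_nonneg (by positivity) ENNReal.coe_ne_top)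
      ENNReal.ofReal_ne_top
  intro f hf hfc a b ha hab
  have hba : 0 < b ^ 2 - a ^ 2 := by nlinarith
  set u : EuclideanSpace ℝ (Fin n) → ℝ :=
    fun x => Real.smoothTransition ((f x ^ 2 - a ^ 2) / (b ^ 2 - a ^ 2)) with hu
  have hf1 : ContDiff ℝ 1 f := hf.of_le (by exact_mod_cast le_top)
  have hu1 : ContDiff ℝ 1 u :=
    (Real.smoothTransition.contDiff (n := 1)).comp (by fun_prop)
  have huc : HasCompactSupport u := by
    refine hfc.comp_left (g := fun s => Real.smoothTransition ((s ^ 2 - a ^ 2) / (b ^ 2 - a ^ 2))) ?_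
    apply Real.smoothTransition.zero_of_nonpos
    apply div_nonpos_of_nonpos_of_nonneg _ hba.le
    nlinarith
  have hS := lintegral_pow_le_pow_lintegral_fderiv (μ := volume) hu1 huc hconj
  rw [← hK] at hS
  have hlow : volume {x | b < |f x|} ≤ ∫⁻ x, ‖u x‖ₑ ^ q := by
    have hms : MeasurableSet {x | b < |f x|} :=
      measurableSet_lt measurable_const (hf1.continuous.abs.measurable)
    rw [← lintegral_indicator_one hms]
    apply lintegral_mono
    intro x
    by_cases hx : x ∈ {x | b < |f x|}
    · rw [indicator_of_mem hx]
      have hx' : b < |f x| := hx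
      have : u x = 1 := by
        apply Real.smoothTransition.one_of_one_le
        rw [le_div_iff₀ hba]
        have := sq_abs (f x)
        nlinarith
      simp [this]
    · rw [indicator_of_notMem hx]; exact zero_le
  have hder : ∀ x, ‖fderiv ℝ u x‖ₑ ≤ ({x | a < |f x|}).indicator
      (fun x => ENNReal.ofReal (2 * M / (b - a)) * ENNReal.ofReal ‖gradient f x‖) x := by
    intro x
    have hgr : ‖gradient f x‖ = ‖fderiv ℝ f x‖ := by
      unfold gradient; simp
    have hdf : HasFDerivAt f (fderiv ℝ f x) x :=
      (hf1.differentiable one_ne_zero x).hasFDerivAt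
    set y := (f x ^ 2 - a ^ 2) / (b ^ 2 - a ^ 2) with hy
    have hT : HasDerivAt Real.smoothTransition (deriv Real.smoothTransition y) y :=
      ((Real.smoothTransition.contDiff (n := 1)).differentiable one_ne_zero y).hasDerivAt
    have hin : HasDerivAt (fun s : ℝ => (s ^ 2 - a ^ 2) / (b ^ 2 - a ^ 2))
        (2 * f x / (b ^ 2 - a ^ 2)) (f x) := by
      have := (((hasDerivAt_id (f x)).pow 2).sub_const (a ^ 2)).div_const (b ^ 2 - a ^ 2)
      simpa using this
    have hcomp := (HasDerivAt.comp (f x) (h₂ := Real.smoothTransition) hT hin).comp_hasFDerivAt x hdf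
    have hfd : fderiv ℝ u x
        = (deriv Real.smoothTransition y * (2 * f x / (b ^ 2 - a ^ 2))) • fderiv ℝ f x :=
      hcomp.fderiv
    have hzero : deriv Real.smoothTransition y = 0 → ‖fderiv ℝ u x‖ₑ = 0 := by
      intro h; rw [hfd, h, zero_mul, zero_smul, ← ofReal_norm, norm_zero, ENNReal.ofReal_zero]
    by_cases hx : x ∈ {x | a < |f x|}
    · rw [indicator_of_mem hx]
      by_cases hxb : b ≤ |f x|
      · rw [hzero]
        · exact zero_le
        · apply (hM y).2.2
          rw [hy, le_div_iff₀ hba]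
          have := sq_abs (f x)
          nlinarith
      · push Not at hxb
        rw [hgr, ← ENNReal.ofReal_mul (by apply div_nonneg <;> linarith), ← ofReal_norm]
        apply ENNReal.ofReal_le_ofReal
        rw [hfd, norm_smul]
        gcongr
        rw [norm_mul, Real.norm_eq_abs, Real.norm_eq_abs, abs_div, abs_mul, abs_of_pos hba]
        have h1 : |(2:ℝ)| * |f x| / (b ^ 2 - a ^ 2) ≤ 2 / (b - a) := by
          rw [div_le_div_iff₀ hba (by linarith)]
          simp only [abs_two]
          have : b ^ 2 - a ^ 2 = (b + a) * (b - a) := by ring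
          rw [this, ← mul_assoc]
          apply mul_le_mul_of_nonneg_right _ (by linarith)
          linarith
        calc _ ≤ M * (2 / (b - a)) := mul_le_mul (hM y).1 h1 (by positivity) hM0.le
          _ = 2 * M / (b - a) := by ring
    · rw [hzero]
      · exact zero_le
      · apply (hM y).2.1
        apply div_nonpos_of_nonpos_of_nonneg _ hba.le
        have h1 : |f x| ≤ a := not_lt.1 hx
        have := sq_abs (f x)
        have := abs_nonneg (f x)
        nlinarith
  have hms : MeasurableSet {x | a < |f x|} :=
    measurableSet_lt measurable_const (hf1.continuous.abs.measurable)
  have hint : ∫⁻ x, ‖fderiv ℝ u x‖ₑ ≤ ENNReal.ofReal (2 * M / (b - a)) *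
      ∫⁻ x in {x | a < |f x|}, ENNReal.ofReal ‖gradient f x‖ := by
    refine (lintegral_mono hder).trans ?_
    rw [lintegral_indicator hms, lintegral_const_mul' _ _ ENNReal.ofReal_ne_top]
  have h1 : (volume {x | b < |f x|}) ^ (1 - (n:ℝ)⁻¹) ≤
      (K:ℝ≥0∞) ^ q⁻¹ * (ENNReal.ofReal (2 * M / (b - a)) *
      ∫⁻ x in {x | a < |f x|}, ENNReal.ofReal ‖gradient f x‖) := by
    have hqi : 1 - (n:ℝ)⁻¹ = q⁻¹ := by rw [hq, inv_inv]
    rw [hqi, ENNReal.rpow_inv_le_iff hq0, ENNReal.mul_rpow_of_nonneg _ _ hq0.le,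
      ← ENNReal.rpow_mul, inv_mul_cancel₀ hq0.ne', ENNReal.rpow_one]
    refine (hlow.trans hS).trans ?_
    gcongr
  calc _ ≤ ENNReal.ofReal (b - a) * ((K:ℝ≥0∞) ^ q⁻¹ * (ENNReal.ofReal (2 * M / (b - a)) *
      ∫⁻ x in {x | a < |f x|}, ENNReal.ofReal ‖gradient f x‖)) := by gcongr
    _ = (K:ℝ≥0∞) ^ q⁻¹ * (ENNReal.ofReal (b - a) * ENNReal.ofReal (2 * M / (b - a))) *
      ∫⁻ x in {x | a < |f x|}, ENNReal.ofReal ‖gradient f x‖ := by ring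
    _ = _ := by
      rw [← ENNReal.ofReal_mul (by linarith), mul_div_cancel₀ _ (by linarith : b - a ≠ 0)]

lemma rearr_step (n : ℕ) (hn : 2 ≤ n) : ∃ C : ℝ≥0∞, C ≠ ∞ ∧
    ∀ f : EuclideanSpace ℝ (Fin n) → ℝ, ContDiff ℝ (⊤ : ℕ∞) f → HasCompactSupport f →
    ∀ t : ℝ, 0 < t → rearr volume f t ≤ rearr volume f (2 * t) +
      C * (ENNReal.ofReal t ^ (n:ℝ)⁻¹ * RR volume (fun x => ‖gradient f x‖) (2 * t)) := by
  obtain ⟨C, hC, H⟩ := trunc_sobolev n hn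
  have hn' : (2:ℝ) ≤ n := by exact_mod_cast hn
  have hni : (n:ℝ)⁻¹ ≤ 2⁻¹ := inv_anti₀ (by norm_num) hn'
  refine ⟨C * 4, ENNReal.mul_ne_top hC (by simp), fun f hf hfc t ht => ?_⟩
  have ht0 : ENNReal.ofReal t ≠ 0 := by simpa using ht
  have htt : ENNReal.ofReal t ≠ ∞ := ENNReal.ofReal_ne_top
  have hgm : Measurable fun x => ‖gradient f x‖ := by
    have : (fun x => ‖gradient f x‖) = fun x => ‖fderiv ℝ f x‖ := by
      ext x; unfold gradient; simp
    rw [this]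
    exact (hf.continuous_fderiv (by simp)).norm.measurable
  set A := rearr volume f (2 * t) with hA
  refine le_of_forall_lt fun b' hb' => ?_
  obtain ⟨b, hbb', hb⟩ := exists_between hb'
  refine lt_of_lt_of_le hbb' ?_
  by_cases hAb : b ≤ A
  · exact hAb.trans le_self_add
  push Not at hAb
  have hbtop : b ≠ ∞ := ne_top_of_lt hb
  have hAtop : A ≠ ∞ := ne_top_of_lt hAb
  have hab : A.toReal < b.toReal := (ENNReal.toReal_lt_toReal hAtop hbtop).2 hAb
  have h1 := H f hf hfc A.toReal b.toReal ENNReal.toReal_nonneg hab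
  have hset : ∀ c : ℝ≥0∞, c ≠ ∞ → {x | c.toReal < |f x|} = {x | c < ENNReal.ofReal |f x|} := by
    intro c hc
    ext x
    exact (ENNReal.lt_ofReal_iff_toReal_lt hc).symm
  rw [hset b hbtop, hset A hAtop] at h1
  have h2 : ENNReal.ofReal t ≤ volume {x | b < ENNReal.ofReal |f x|} :=
    (lt_distrib_of_lt_rearr volume f t (lt_of_le_of_lt zero_le hAb) hb).le
  have h3 : volume {x | A < ENNReal.ofReal |f x|} ≤ ENNReal.ofReal (2 * t) :=
    distrib_rearr_le volume f (2 * t)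
  have h4 := setLIntegral_le_RR volume hgm (by positivity : 0 < 2 * t) h3
  simp only [abs_norm] at h4
  have h5 : ENNReal.ofReal (b.toReal - A.toReal) * ENNReal.ofReal t ^ (1 - (n:ℝ)⁻¹) ≤
      C * (2 * ENNReal.ofReal (2 * t) * RR volume (fun x => ‖gradient f x‖) (2 * t)) := by
    refine le_trans ?_ (h1.trans (by gcongr))
    gcongr
    linarith
  have h6 : ENNReal.ofReal (b.toReal - A.toReal) ≤
      C * 4 * (ENNReal.ofReal t ^ (n:ℝ)⁻¹ * RR volume (fun x => ‖gradient f x‖) (2 * t)) := by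
    have h7 : ENNReal.ofReal t = ENNReal.ofReal t ^ (1 - (n:ℝ)⁻¹) * ENNReal.ofReal t ^ (n:ℝ)⁻¹ := by
      rw [← ENNReal.rpow_add _ _ ht0 htt]; simp
    have h8 : ENNReal.ofReal t ^ (1 - (n:ℝ)⁻¹) ≠ 0 := by
      simp [ENNReal.rpow_eq_zero_iff, ht0, ht.not_ge]
    have h9 : ENNReal.ofReal t ^ (1 - (n:ℝ)⁻¹) ≠ ∞ :=
      ENNReal.rpow_ne_top_of_nonneg (by linarith) htt
    rw [← ENNReal.mul_le_mul_iff_left h8 h9]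
    refine h5.trans (le_of_eq ?_)
    rw [ENNReal.ofReal_mul (by norm_num : (0:ℝ) ≤ 2), ENNReal.ofReal_ofNat]
    nth_rewrite 1 [h7]
    ring
  calc b = ENNReal.ofReal (A.toReal + (b.toReal - A.toReal)) := by
        rw [add_sub_cancel, ENNReal.ofReal_toReal hbtop]
    _ = A + ENNReal.ofReal (b.toReal - A.toReal) := by
        rw [ENNReal.ofReal_add ENNReal.toReal_nonneg (by linarith), ENNReal.ofReal_toReal hAtop]
    _ ≤ _ := by gcongr

lemma rearr_tsum (n : ℕ) (hn : 2 ≤ n) : ∃ C : ℝ≥0∞, C ≠ ∞ ∧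
    ∀ f : EuclideanSpace ℝ (Fin n) → ℝ, ContDiff ℝ (⊤ : ℕ∞) f → HasCompactSupport f →
    ∀ t : ℝ, 0 < t → rearr volume f t ≤ ∑' j : ℕ,
      C * (ENNReal.ofReal (2 ^ j * t) ^ (n:ℝ)⁻¹ *
        RR volume (fun x => ‖gradient f x‖) (2 ^ (j + 1) * t)) := by
  obtain ⟨C, hC, H⟩ := rearr_step n hn
  refine ⟨C, hC, fun f hf hfc t ht => ?_⟩
  have hind : ∀ K : ℕ, rearr volume f t ≤ (∑ j ∈ Finset.range K,
      C * (ENNReal.ofReal (2 ^ j * t) ^ (n:ℝ)⁻¹ *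
        RR volume (fun x => ‖gradient f x‖) (2 ^ (j + 1) * t))) + rearr volume f (2 ^ K * t) := by
    intro K
    induction K with
    | zero => simp
    | succ K ih =>
      refine ih.trans ?_
      rw [Finset.sum_range_succ, add_assoc]
      gcongr
      rw [add_comm]
      have := H f hf hfc (2 ^ K * t) (by positivity)
      rwa [← mul_assoc, ← pow_succ'] at this
  -- the tail vanishes
  have hfin : volume (tsupport f) < ∞ := hfc.isCompact.measure_lt_top
  obtain ⟨K, hK⟩ : ∃ K : ℕ, (volume (tsupport f)).toReal ≤ 2 ^ K * t := by
    obtain ⟨K, hK⟩ := pow_unbounded_of_one_lt ((volume (tsupport f)).toReal / t)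
      (by norm_num : (1:ℝ) < 2)
    exact ⟨K, by rw [div_lt_iff₀ ht] at hK; exact hK.le⟩
  have hz : rearr volume f (2 ^ K * t) = 0 := by
    refine le_antisymm (le_of_forall_gt fun l hl => ?_) zero_le
    obtain ⟨m, hm0, hml⟩ := exists_between hl
    refine lt_of_le_of_lt (sInf_le ⟨hm0, ?_⟩) hml
    calc distribFn volume f m ≤ volume (tsupport f) := by
          apply measure_mono
          intro x hx
          apply subset_tsupport
          intro h0
          have : m < ENNReal.ofReal |f x| := hx
          simp [h0] at this
      _ = ENNReal.ofReal (volume (tsupport f)).toReal := (ENNReal.ofReal_toReal hfin.ne).symm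
      _ ≤ _ := ENNReal.ofReal_le_ofReal hK
  have := hind K
  rw [hz, add_zero] at this
  exact this.trans (ENNReal.sum_le_tsum _)

lemma lorentz_eq_LN {α : Type*} [MeasurableSpace α] (μ : Measure α) (p q : ℝ≥0∞) (f : α → ℝ) :
    lorentz μ p q f = LN q (fun t => ENNReal.ofReal t ^ p.toReal⁻¹ * rearr μ f t) := by
  have := rearr_measurable μ f
  unfold lorentz LN
  rw [lintegral_mT _ (by fun_prop)]

lemma tsum_half_ne_top {β : ℝ} (hβ : 0 < β) :
    ∑' k : ℕ, ENNReal.ofReal ((1/2)^k) ^ β ≠ ∞ := by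
  have h : ∀ k : ℕ, ENNReal.ofReal ((1/2)^k) ^ β = (ENNReal.ofReal (1/2) ^ β) ^ k := by
    intro k
    rw [ENNReal.ofReal_pow (by norm_num), ← ENNReal.rpow_natCast, ← ENNReal.rpow_natCast,
      ← ENNReal.rpow_mul, ← ENNReal.rpow_mul, mul_comm]
  simp_rw [h]
  rw [ENNReal.tsum_geometric]
  have : ENNReal.ofReal (1/2) ^ β < 1 := by
    apply ENNReal.rpow_lt_one _ hβ
    rw [← ENNReal.ofReal_one]
    exact (ENNReal.ofReal_lt_ofReal_iff one_pos).2 (by norm_num)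
  exact ENNReal.inv_ne_top.2 (tsub_pos_of_lt this).ne'

lemma LN_RR {α : Type*} [MeasurableSpace α] (μ : Measure α) (g : α → ℝ) {θ : ℝ} (hθ0 : 0 ≤ θ)
    {v : ℝ≥0∞} (hv : 1 ≤ v) :
    LN v (fun s => ENNReal.ofReal s ^ θ * RR μ g s) ≤
      (∑' k : ℕ, ENNReal.ofReal ((1/2)^k) ^ (1 - θ)) *
        LN v (fun s => ENNReal.ofReal s ^ θ * rearr μ g s) := by
  have hm := rearr_measurable μ g
  set G : ℝ → ℝ≥0∞ := fun s => ENNReal.ofReal s ^ θ * rearr μ g s with hG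
  have hGm : Measurable G := by fun_prop
  calc LN v (fun s => ENNReal.ofReal s ^ θ * RR μ g s)
      ≤ LN v (fun s => ∑' k : ℕ, ENNReal.ofReal ((1/2)^k) ^ (1 - θ) * G ((1/2)^k * s)) := by
        apply LN_mono
        intro s hs
        unfold RR
        rw [← ENNReal.tsum_mul_left]
        refine ENNReal.tsum_le_tsum fun k => le_of_eq ?_
        have hx : (0:ℝ) < (1/2)^k := by positivity
        have hx0 : ENNReal.ofReal ((1/2)^k) ≠ 0 := by simpa using hx
        have e : ENNReal.ofReal ((1/2)^k) =
            ENNReal.ofReal ((1/2)^k) ^ (1 - θ) * ENNReal.ofReal ((1/2)^k) ^ θ := by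
          rw [← ENNReal.rpow_add _ _ hx0 ENNReal.ofReal_ne_top]; simp
        simp only [hG]
        rw [ENNReal.ofReal_mul hx.le, ENNReal.mul_rpow_of_nonneg _ _ hθ0, mul_comm s]
        nth_rewrite 1 [e]
        ring
    _ ≤ ∑' k : ℕ, LN v (fun s => ENNReal.ofReal ((1/2)^k) ^ (1 - θ) * G ((1/2)^k * s)) :=
        LN_tsum_le hv fun k => by fun_prop
    _ = ∑' k : ℕ, ENNReal.ofReal ((1/2)^k) ^ (1 - θ) * LN v G := by
        congr 1; ext k
        rw [LN_const_mul hv _ (by fun_prop), LN_dil hGm (by positivity)]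
    _ = _ := ENNReal.tsum_mul_right

lemma lorentz_sobolev (n : ℕ) (hn : 2 ≤ n) (p : ℝ) (hp1 : 1 < p) (hpn : p < n) {v : ℝ≥0∞}
    (hv : 1 ≤ v) : ∃ C : ℝ≥0∞, C ≠ ∞ ∧
    ∀ f : EuclideanSpace ℝ (Fin n) → ℝ, ContDiff ℝ (⊤ : ℕ∞) f → HasCompactSupport f →
    LN v (fun t => ENNReal.ofReal t ^ (p⁻¹ - (n:ℝ)⁻¹) * rearr volume f t) ≤
      C * LN v (fun t => ENNReal.ofReal t ^ p⁻¹ * rearr volume (fun x => ‖gradient f x‖) t) := by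
  obtain ⟨C, hC, H⟩ := rearr_tsum n hn
  have hβ : 0 < p⁻¹ - (n:ℝ)⁻¹ := sub_pos.2 (inv_strictAnti₀ (by linarith) hpn)
  have hθ0 : 0 < p⁻¹ := by positivity
  have hθ1 : 0 < 1 - p⁻¹ := sub_pos.2 (inv_lt_one_of_one_lt₀ hp1)
  have hni0 : 0 ≤ (n:ℝ)⁻¹ := by positivity
  set β := p⁻¹ - (n:ℝ)⁻¹ with hβd
  refine ⟨C * (∑' k : ℕ, ENNReal.ofReal ((1/2)^k) ^ β) *
    (∑' k : ℕ, ENNReal.ofReal ((1/2)^k) ^ (1 - p⁻¹)),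
    ENNReal.mul_ne_top (ENNReal.mul_ne_top hC (tsum_half_ne_top hβ)) (tsum_half_ne_top hθ1),
    fun f hf hfc => ?_⟩
  set g : EuclideanSpace ℝ (Fin n) → ℝ := fun x => ‖gradient f x‖ with hg
  set S : ℝ → ℝ≥0∞ := fun s => ENNReal.ofReal s ^ p⁻¹ * RR volume g s with hS
  have hRm := RR_measurable volume g
  have hSm : Measurable S := by fun_prop
  calc LN v (fun t => ENNReal.ofReal t ^ β * rearr volume f t)
      ≤ LN v (fun t => ∑' j : ℕ, (C * ENNReal.ofReal ((1/2)^j) ^ β) * S (2 ^ (j+1) * t)) := by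
        apply LN_mono
        intro t ht
        calc ENNReal.ofReal t ^ β * rearr volume f t ≤ ENNReal.ofReal t ^ β * _ := by
              gcongr
              exact H f hf hfc t ht
          _ = ∑' j : ℕ, ENNReal.ofReal t ^ β * (C * (ENNReal.ofReal (2 ^ j * t) ^ (n:ℝ)⁻¹ *
                RR volume g (2 ^ (j + 1) * t))) := ENNReal.tsum_mul_left.symm
          _ ≤ _ := by
            refine ENNReal.tsum_le_tsum fun j => ?_
            have h2 : (0:ℝ) < 2 ^ j * t := by positivity
            have h20 : ENNReal.ofReal (2 ^ j * t) ≠ 0 := by simpa using ht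
            have e1 : ENNReal.ofReal t ^ β =
                ENNReal.ofReal ((1/2)^j) ^ β * ENNReal.ofReal (2 ^ j * t) ^ β := by
              rw [← ENNReal.mul_rpow_of_nonneg _ _ hβ.le, ← ENNReal.ofReal_mul (by positivity),
                ← mul_assoc, ← mul_pow]
              norm_num
            have e2 : ENNReal.ofReal (2 ^ j * t) ^ β * ENNReal.ofReal (2 ^ j * t) ^ (n:ℝ)⁻¹
                = ENNReal.ofReal (2 ^ j * t) ^ p⁻¹ := by
              rw [← ENNReal.rpow_add _ _ h20 ENNReal.ofReal_ne_top, hβd, sub_add_cancel]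
            have e3 : ENNReal.ofReal (2 ^ j * t) ^ p⁻¹ ≤ ENNReal.ofReal (2 ^ (j+1) * t) ^ p⁻¹ := by
              gcongr
              · norm_num
              · omega
            calc _ = C * ENNReal.ofReal ((1/2)^j) ^ β * ((ENNReal.ofReal (2 ^ j * t) ^ β *
                  ENNReal.ofReal (2 ^ j * t) ^ (n:ℝ)⁻¹) * RR volume g (2 ^ (j + 1) * t)) := by
                  rw [e1]; ring
              _ ≤ _ := by
                  rw [e2]
                  simp only [hS]
                  gcongr
    _ ≤ ∑' j : ℕ, LN v (fun t => (C * ENNReal.ofReal ((1/2)^j) ^ β) * S (2 ^ (j+1) * t)) :=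
        LN_tsum_le hv fun k => by fun_prop
    _ = ∑' j : ℕ, (C * ENNReal.ofReal ((1/2)^j) ^ β) * LN v S := by
        congr 1; ext k
        rw [LN_const_mul hv _ (by fun_prop), LN_dil hSm (by positivity)]
    _ = C * (∑' k : ℕ, ENNReal.ofReal ((1/2)^k) ^ β) * LN v S := by
        rw [ENNReal.tsum_mul_right, ENNReal.tsum_mul_left]
    _ ≤ C * (∑' k : ℕ, ENNReal.ofReal ((1/2)^k) ^ β) *
        ((∑' k : ℕ, ENNReal.ofReal ((1/2)^k) ^ (1 - p⁻¹)) * _) := by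
        gcongr
        exact LN_RR volume g hθ0.le hv
    _ = _ := by ring

/-- Gagliardo–Nirenberg inequality in Lorentz norms on ℝⁿ (Remark 4.2 of the paper):
for `p* = np/(n-p)`, `1/r = a/p* + (1-a)/t`, `1/u = a/v + (1-a)/w`,
`‖f‖_{r,u} ≤ c ‖|∇f|‖_{p,v}^a ‖f‖_{t,w}^{1-a}`. -/
theorem stmt_19 (n : ℕ) (hn : 2 ≤ n) (p : ℝ) (hp1 : 1 < p) (hpn : p < n)
    (a : ℝ) (ha0 : 0 ≤ a) (ha1 : a ≤ 1)
    (r t : ℝ≥0∞) (hr : 1 < r) (ht : 1 < t)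
    (u v w : ℝ≥0∞) (hu : 1 ≤ u) (hv : 1 ≤ v) (hw : 1 ≤ w)
    (hrt : 1 / r = ENNReal.ofReal a / ENNReal.ofReal ((n : ℝ) * p / ((n : ℝ) - p)) +
      ENNReal.ofReal (1 - a) / t)
    (huvw : 1 / u = ENNReal.ofReal a / v + ENNReal.ofReal (1 - a) / w) :
    ∃ c : ℝ, 0 < c ∧ ∀ f : EuclideanSpace ℝ (Fin n) → ℝ,
      ContDiff ℝ (⊤ : ℕ∞) f → HasCompactSupport f →
      lorentz volume r u f ≤
        ENNReal.ofReal c *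
          lorentz volume (ENNReal.ofReal p) v (fun x => ‖gradient f x‖) ^ a *
          lorentz volume t w f ^ (1 - a) := by
  have hn' : (2:ℝ) ≤ n := by exact_mod_cast hn
  have hnp : 0 < (n:ℝ) - p := by linarith
  have hps : 0 < (n : ℝ) * p / ((n : ℝ) - p) := by positivity
  have hpsi : ((n : ℝ) * p / ((n : ℝ) - p))⁻¹ = p⁻¹ - (n:ℝ)⁻¹ := by
    have : (n:ℝ) ≠ 0 := by positivity
    field_simp
  rcases ha0.eq_or_lt with h0 | ha0'
  · subst h0
    have hr' : r = t := by simpa using hrt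
    have hu' : u = w := by simpa using huvw
    subst hr' hu'
    exact ⟨1, one_pos, fun f _ _ => by simp⟩
  obtain ⟨C, hC, H⟩ := lorentz_sobolev n hn p hp1 hpn hv
  have hCa : C ^ a ≠ ∞ := ENNReal.rpow_ne_top_of_nonneg ha0 hC
  refine ⟨(C ^ a).toReal + 1, by positivity, fun f hf hfc => ?_⟩
  have hc : C ^ a ≤ ENNReal.ofReal ((C ^ a).toReal + 1) := by
    rw [ENNReal.ofReal_add ENNReal.toReal_nonneg zero_le_one, ENNReal.ofReal_toReal hCa]
    exact le_self_add
  have hm := rearr_measurable volume f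
  have hS := ENNReal.rpow_le_rpow (H f hf hfc) ha0
  rw [ENNReal.mul_rpow_of_nonneg _ _ ha0] at hS
  have er : r.toReal⁻¹ = a * (p⁻¹ - (n:ℝ)⁻¹) + (1 - a) * t.toReal⁻¹ := by
    have := congrArg ENNReal.toReal hrt
    rw [ENNReal.toReal_add] at this
    · rw [ENNReal.toReal_div, ENNReal.toReal_div, ENNReal.toReal_div, ENNReal.toReal_ofReal ha0,
        ENNReal.toReal_ofReal hps.le, ENNReal.toReal_ofReal (by linarith : 0 ≤ 1 - a), div_eq_mul_inv,
        div_eq_mul_inv a, div_eq_mul_inv _ t.toReal, hpsi] at this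
      simpa using this
    · exact ENNReal.div_ne_top ENNReal.ofReal_ne_top (by simpa using hps)
    · exact ENNReal.div_ne_top ENNReal.ofReal_ne_top (zero_lt_one.trans ht).ne'
  simp only [lorentz_eq_LN, ENNReal.toReal_ofReal (zero_le_one.trans hp1.le)]
  rcases ha1.eq_or_lt with h1 | ha1'
  · subst h1
    have hu' : u = v := by simpa using huvw
    subst hu'
    simp only [sub_self, zero_mul, add_zero, one_mul] at er
    simp only [ENNReal.rpow_one] at hS hc
    simp only [sub_self, ENNReal.rpow_zero, mul_one, ENNReal.rpow_one, er]
    exact hS.trans (by gcongr)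
  calc LN u (fun s => ENNReal.ofReal s ^ r.toReal⁻¹ * rearr volume f s)
      ≤ LN u (fun s => (ENNReal.ofReal s ^ (p⁻¹ - (n:ℝ)⁻¹) * rearr volume f s) ^ a *
          (ENNReal.ofReal s ^ t.toReal⁻¹ * rearr volume f s) ^ (1 - a)) := by
        apply LN_mono
        intro s hs
        have hs0 : ENNReal.ofReal s ≠ 0 := by simpa using hs
        have e1 : rearr volume f s = rearr volume f s ^ a * rearr volume f s ^ (1 - a) := by
          rw [← ENNReal.rpow_add_of_nonneg _ _ ha0 (by linarith)]; simp
        rw [ENNReal.mul_rpow_of_nonneg _ _ ha0, ENNReal.mul_rpow_of_nonneg _ _ (by linarith),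
          er, ENNReal.rpow_add _ _ hs0 ENNReal.ofReal_ne_top, ← ENNReal.rpow_mul,
          ← ENNReal.rpow_mul, mul_comm a, mul_comm (1 - a)]
        nth_rewrite 1 [e1]
        apply le_of_eq
        ring
    _ ≤ _ := LN_holder hu hv hw ha0' ha1' huvw (by fun_prop) (by fun_prop)
    _ ≤ _ := by
        refine mul_le_mul_left ?_ _
        exact hS.trans (by gcongr)
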